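/- Let n ∈ ℕ and let F ⊆ ℝⁿ be a nonempty closed set such that the paratingent cone Ptg(F,x) spans ℝⁿ for every accumulation point x of F. Let Y be a normed linear space and let f : F → Y be a function which has a relative strict derivative (with respect to F) at every accumulation point of F; by uniqueness this defines a map x ↦ D(x) on der F, where D(x) is the unique relative strict derivative of f at x with respect to F. Then there exists a function f̄ : ℝⁿ → Y extending f which is Fréchet differentiable at every point of ℝⁿ, and such that for every x belonging to either (a) ℝⁿ \ der F, or (b) the set of points of der F at which the map D : der F → L(ℝⁿ,Y) is continuous with respect to der F, the function f̄ is strictly differentiable at x (with respect to ℝⁿ) and the Fréchet derivative f̄′ is continuous at x (with respect to ℝⁿ). -/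

import Mathlib

/-!
The extension is of Whitney type, but `D` is only a derivative, neither continuous nor locally
bounded, so the slopes of the affine pieces have to be chosen with care.

*Scale.* Let `d x` be the least `t` such that two distinct points of `F` lie within distance `t`
of `x`, capped at `1` (`exists_scale`). It is `1`-Lipschitz, it vanishes exactly on `derSet F`,
and the ball of radius `d x` around `x` contains at most one point of `F`. A Whitney partition of
unity `φ y` on `{0 < d}` has gradients of size `C / d` (`exists_whitney_partition`); the bounded
overlap comes from a packing bound. Set `g x = ∑ φ y x • (f (p y) + L y (x - p y))` there, and
`g = f` on `derSet F`, where `p y ∈ F` is within `2 * d y` of `y` if `d y < 1`, and is the only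
point of `F` in the ball of radius `d y` around `y` whenever there is one. This makes `g = f` at
the isolated points of `F` too.

*Slopes.* Differentiability of `g` at `a ∈ derSet F` needs `‖L y - D a‖ * d y = o(‖y - a‖)`, and
continuity of the derivative at `a` needs `L y → D a` (`exists_slopes`). Put `q = (d y) ^ (1/4)`.
The slope `L y` is taken among the values `D b` with `b ∈ derSet F` not much farther from `y` than
the set `derSet F` is, up to `q ^ 2`, and with `‖D b‖ ≤ 1 / q` (and `L y = 0`
if there is no such `b`); among these it almost minimizes the
error of `f u - f v ≈ L (u - v)` over `u, v ∈ F` within `q ^ 2` of `y`. If `‖y - a‖ ≤ q ^ 2 / 2`,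
then `D a` competes and has small error, so `L y - D a` is small on the differences near `a`; as
these generate `Ptg F a`, which spans the space, `‖L y - D a‖` is small
(`exists_opNorm_bound_of_span_ptg`). Otherwise `‖L y‖ * d y ≤ q ^ 3 = o(‖y - a‖)`. Finally, at a
point where `D` is continuous every candidate `D b` is close to `D a`.

A differentiable map whose derivative is continuous at a point is strictly differentiable there,
so it is enough to control the derivative of `g`.
-/

open Filter Metric Set Topology

/-- `T` is a relative strict derivative of `f` at `a` with respect to `A`. -/
def RelStrictDerivAt {X : Type*} [NormedAddCommGroup X] [NormedSpace ℝ X]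
    {Y : Type*} [NormedAddCommGroup Y] [NormedSpace ℝ Y]
    (f : X → Y) (A : Set X) (T : X →L[ℝ] Y) (a : X) : Prop :=
  ∀ ε : ℝ, 0 < ε → ∃ δ : ℝ, 0 < δ ∧ ∀ x ∈ A, ∀ y ∈ A,
    ‖x - a‖ < δ → ‖y - a‖ < δ → ‖f y - f x - T (y - x)‖ ≤ ε * ‖y - x‖

/-- The paratingent cone of `F` at `x`. -/
def Ptg {E : Type*} [NormedAddCommGroup E] [NormedSpace ℝ E] (F : Set E) (x : E) : Set E :=
  {v | ∃ (xk yk : ℕ → E) (αk : ℕ → ℝ),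
    (∀ k, xk k ∈ F) ∧ (∀ k, yk k ∈ F) ∧
    Tendsto xk atTop (𝓝 x) ∧ Tendsto yk atTop (𝓝 x) ∧
    Tendsto (fun k => αk k • (yk k - xk k)) atTop (𝓝 v)}

/-- The set of accumulation points of `F`. -/
def derSet {E : Type*} [TopologicalSpace E] (F : Set E) : Set E :=
  {x | x ∈ closure (F \ {x})}

/-! ### A Whitney partition of unity -/

/-- A maximal set, by Zorn, of points of `{0 < d}` separated in proportion to `d`. The smaller of
the two scales in the separation condition is what makes maximality yield the covering property. -/
theorem exists_separated_net {E : Type*} [NormedAddCommGroup E] (d : E → ℝ) :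
    ∃ S : Set E, (∀ y ∈ S, 0 < d y) ∧
      (∀ y ∈ S, ∀ z ∈ S, y ≠ z → min (d y) (d z) / 20 ≤ ‖y - z‖) ∧
      ∀ x, 0 < d x → ∃ y ∈ S, ‖x - y‖ ≤ d y / 20 := by
  obtain ⟨S, hS⟩ := zorn_subset {S : Set E | (∀ y ∈ S, 0 < d y) ∧
      (∀ y ∈ S, ∀ z ∈ S, y ≠ z → min (d y) (d z) / 20 ≤ ‖y - z‖)} (by
    intro c hc hchain
    refine ⟨⋃₀ c, ⟨?_, ?_⟩, fun s hs => subset_sUnion_of_mem hs⟩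
    · rintro y ⟨s, hs, hy⟩
      exact (hc hs).1 y hy
    · rintro y ⟨s, hs, hy⟩ z ⟨t, ht, hz⟩ hyz
      rcases hchain.total hs ht with h | h
      · exact (hc ht).2 y (h hy) z hz hyz
      · exact (hc hs).2 y hy z (h hz) hyz)
  refine ⟨S, hS.prop.1, hS.prop.2, fun x hx => ?_⟩
  by_contra! hcon
  have hxS : x ∉ S := fun h => by
    have := hcon x h
    simp at this
    linarith
  have : insert x S ⊆ S := hS.le_of_ge (y := insert x S) (by
    refine ⟨?_, ?_⟩
    · rintro y (rfl | hy)
      · exact hx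
      · exact hS.prop.1 y hy
    · have key : ∀ y ∈ S, min (d x) (d y) / 20 ≤ ‖x - y‖ := fun y hy => by
        have := hcon y hy
        have := min_le_right (d x) (d y)
        linarith
      rintro y (rfl | hy) z (rfl | hz) hyz
      · exact absurd rfl hyz
      · exact key z hz
      · rw [min_comm, norm_sub_rev]; exact key y hy
      · exact hS.prop.2 y hy z hz hyz) (subset_insert x S)
  exact hxS (this (mem_insert x S))

/-- Bounded overlap: when `d` is `1`-Lipschitz, the points of a net as in `exists_separated_net` whose
balls of radius `3 / 40 * d y` contain `x` have scales comparable to `d x`, so after rescaling they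
form a `1`-separated subset of the ball of radius `2`. -/
theorem packing_card_le {E : Type*} [NormedAddCommGroup E] [NormedSpace ℝ E]
    [FiniteDimensional ℝ E] (d : E → ℝ) (hd : ∀ x y, d x - d y ≤ ‖x - y‖) (S : Set E)
    (hsep : ∀ y ∈ S, ∀ z ∈ S, y ≠ z → min (d y) (d z) / 20 ≤ ‖y - z‖)
    (x : E) (hx : 0 < d x) (A : Finset E)
    (hA : ∀ y ∈ A, y ∈ S ∧ ‖x - y‖ ≤ 3 / 40 * d y) :
    A.card ≤ 5 ^ Module.finrank ℝ E := by
  classical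
  -- every `y ∈ A` has `d y` within `[40/43, 40/37]` times `d x`; rescale by the separation
  set r : ℝ := 40 / 43 * d x / 20 with hr
  have hr0 : 0 < r := by positivity
  have hup : ∀ y ∈ A, d y ≤ 40 / 37 * d x := fun y hy => by
    have h1 := (hA y hy).2
    have h2 := hd y x
    rw [norm_sub_rev] at h2
    linarith
  have hlo : ∀ y ∈ A, 40 / 43 * d x ≤ d y := fun y hy => by
    have h1 := (hA y hy).2
    have h2 := hd x y
    linarith
  let g : E → E := fun y => r⁻¹ • (y - x)
  have hg : Function.Injective g := fun y z h => by
    have := smul_right_injective E (inv_ne_zero hr0.ne') h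
    simpa using this
  rw [← Finset.card_image_of_injective A hg]
  apply Besicovitch.card_le_of_separated
  · intro c hc
    obtain ⟨y, hy, rfl⟩ := Finset.mem_image.1 hc
    simp only [g, norm_smul, norm_inv, Real.norm_eq_abs, abs_of_pos hr0]
    rw [inv_mul_le_iff₀ hr0, norm_sub_rev]
    have h1 := (hA y hy).2
    have h2 := hup y hy
    rw [hr]; linarith
  · intro c hc e he hce
    obtain ⟨y, hy, rfl⟩ := Finset.mem_image.1 hc
    obtain ⟨z, hz, rfl⟩ := Finset.mem_image.1 he
    have hyz : y ≠ z := fun h => hce (by rw [h])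
    have : g y - g z = r⁻¹ • (y - z) := by
      simp only [g, ← smul_sub]; congr 1; abel
    rw [this, norm_smul, norm_inv, Real.norm_eq_abs, abs_of_pos hr0, le_inv_mul_iff₀ hr0]
    have h1 := hsep y (hA y hy).1 z (hA z hz).1 hyz
    have h2 : 40 / 43 * d x ≤ min (d y) (d z) := le_min (hlo y hy) (hlo z hz)
    rw [hr]; linarith

/-- A Whitney partition of unity on `{0 < d}`, indexed by points `y` at the scale `d y`. The finite
set `A` contains all the indices active near `x`. The bound on the gradients at `x` is stated for
their sum over `A`, so that it already incorporates the bounded overlap. -/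
theorem exists_whitney_partition {E : Type*} [NormedAddCommGroup E] [NormedSpace ℝ E]
    [FiniteDimensional ℝ E] (d : E → ℝ) (hd : ∀ x y, d x - d y ≤ ‖x - y‖) :
    ∃ (C : ℝ) (φ : E → E → ℝ), 0 ≤ C ∧ ∀ x, 0 < d x → ∃ A : Finset E,
      (∀ y ∈ A, 0 < d y ∧ ‖x - y‖ ≤ d y / 10 ∧ 0 ≤ φ y x ∧ ContDiffAt ℝ 1 (φ y) x) ∧
      (∀ᶠ z in 𝓝 x, (∀ y ∉ A, φ y z = 0) ∧ ∑ y ∈ A, φ y z = 1) ∧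
      ∑ y ∈ A, ‖fderiv ℝ (φ y) x‖ ≤ C / d x := by
  classical
  obtain ⟨S, hSpos, hsep, hcov⟩ := exists_separated_net d
  let b₀ : ContDiffBump (0 : E) := ⟨1, 5 / 4, by norm_num, by norm_num⟩
  have hb₀ : ContDiff ℝ 1 b₀ := b₀.contDiff
  obtain ⟨K, hK⟩ := hb₀.lipschitzWith_of_hasCompactSupport b₀.hasCompactSupport (by norm_num)
  -- bumps equal to `1` on the ball of radius `d y / 20`, zero outside the one of radius `d y / 16`
  let b : E → E → ℝ := fun y x => if y ∈ S then b₀ ((d y / 20)⁻¹ • (x - y)) else 0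
  have hbC : ∀ y, ContDiff ℝ 1 (b y) := fun y => by
    by_cases hy : y ∈ S
    · simp only [b, hy, if_true]
      exact hb₀.comp (contDiff_const.smul (contDiff_id.sub contDiff_const))
    · simp only [b, hy, if_false]; exact contDiff_const
  have hb0 : ∀ y x, 0 ≤ b y x := fun y x => by
    simp only [b]; split_ifs
    · exact b₀.nonneg
    · exact le_rfl
  have hbsupp : ∀ y x, b y x ≠ 0 → y ∈ S ∧ ‖x - y‖ ≤ 1 / 16 * d y := fun y x h => by
    by_cases hy : y ∈ S
    · refine ⟨hy, ?_⟩
      by_contra! hlt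
      apply h
      simp only [b, hy, if_true]
      apply b₀.zero_of_le_dist
      have h20 : 0 < d y / 20 := by have := hSpos y hy; positivity
      rw [dist_zero_right, norm_smul, norm_inv, Real.norm_eq_abs, abs_of_pos h20,
        le_inv_mul_iff₀ h20]
      change d y / 20 * (5 / 4) ≤ _
      linarith
    · simp [b, hy] at h
  have hbone : ∀ x, 0 < d x → ∃ y, b y x = 1 := fun x hx => by
    obtain ⟨y, hy, hxy⟩ := hcov x hx
    refine ⟨y, ?_⟩
    simp only [b, hy, if_true]
    apply b₀.one_of_mem_closedBall
    have h20 : 0 < d y / 20 := by have := hSpos y hy; positivity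
    rw [mem_closedBall, dist_zero_right, norm_smul, norm_inv, Real.norm_eq_abs, abs_of_pos h20,
      inv_mul_le_iff₀ h20]
    change _ ≤ d y / 20 * 1
    linarith
  have hbder : ∀ y ∈ S, ∀ x, ‖fderiv ℝ (b y) x‖ ≤ K * (20 / d y) := fun y hy x => by
    have hdy := hSpos y hy
    have hL : LipschitzWith (K * ‖(d y / 20)⁻¹‖₊) (b y) := by
      have h1 : LipschitzWith ‖(d y / 20)⁻¹‖₊ (fun x : E => (d y / 20)⁻¹ • (x - y)) :=
        LipschitzWith.of_dist_le_mul fun u v => by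
          rw [dist_eq_norm, ← smul_sub, norm_smul, sub_sub_sub_cancel_right, dist_eq_norm]
          rfl
      have := hK.comp h1
      simp only [b, hy, if_true]
      exact this
    have := norm_fderiv_le_of_lipschitz ℝ hL (x₀ := x)
    refine this.trans_eq ?_
    rw [NNReal.coe_mul, coe_nnnorm, Real.norm_eq_abs, abs_of_pos (by positivity), inv_div]
  let s : E → ℝ := fun x => ∑ᶠ y, b y x
  let N : ℕ := 5 ^ Module.finrank ℝ E
  refine ⟨2 * (N * (K * 20 * (43 / 40))), fun y x => b y x * (s x)⁻¹, by positivity,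
    fun x hx => ?_⟩
  -- the finite set of indices active near `x`
  have hfin : {y | y ∈ S ∧ ‖x - y‖ ≤ 3 / 40 * d y}.Finite := by
    by_contra hinf
    obtain ⟨t, ht, htc⟩ := Set.Infinite.exists_subset_card_eq hinf (N + 1)
    have := packing_card_le d hd S hsep x hx t (fun y hy => ht hy)
    omega
  set A : Finset E := hfin.toFinset with hAdef
  have hA : ∀ y, y ∈ A ↔ y ∈ S ∧ ‖x - y‖ ≤ 3 / 40 * d y := fun y => by simp [hAdef]
  have hAcard : A.card ≤ N := packing_card_le d hd S hsep x hx A (fun y hy => (hA y).1 hy)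
  have hlo : ∀ y ∈ A, 40 / 43 * d x ≤ d y := fun y hy => by
    have h1 := ((hA y).1 hy).2
    have h2 := hd x y
    linarith
  have hnear : ∀ᶠ z in 𝓝 x, 0 < d z ∧ ∀ y ∉ A, b y z = 0 := by
    filter_upwards [Metric.ball_mem_nhds x (show 0 < d x / 200 by positivity)] with z hz
    rw [mem_ball, dist_eq_norm] at hz
    have hxz := hd x z
    rw [norm_sub_rev] at hxz
    refine ⟨by linarith, fun y hy => ?_⟩
    by_contra hne
    obtain ⟨hyS, hzy⟩ := hbsupp y z hne
    apply hy
    rw [hA]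
    refine ⟨hyS, ?_⟩
    have h1 : ‖x - y‖ ≤ ‖z - x‖ + ‖z - y‖ := by
      have := norm_sub_le_norm_sub_add_norm_sub x z y
      rwa [norm_sub_rev x z] at this
    have h2 := hd z y
    linarith
  have hs_eq : ∀ᶠ z in 𝓝 x, s z = ∑ y ∈ A, b y z := by
    filter_upwards [hnear] with z hz
    apply finsum_eq_sum_of_support_subset
    intro y hy
    by_contra h
    exact hy (hz.2 y h)
  have hs1 : ∀ᶠ z in 𝓝 x, 1 ≤ s z := by
    filter_upwards [hnear, hs_eq] with z hz hsz
    obtain ⟨y, hy⟩ := hbone z hz.1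
    have hyA : y ∈ A := by
      by_contra h
      have := hz.2 y h
      rw [hy] at this; exact one_ne_zero this
    rw [hsz, ← hy]
    exact Finset.single_le_sum (f := fun y => b y z) (fun i _ => hb0 i z) hyA
  have hsx : 1 ≤ s x := hs1.self_of_nhds
  have hsC : ContDiffAt ℝ 1 s x := by
    refine ContDiffAt.congr_of_eventuallyEq ?_ hs_eq
    exact ContDiffAt.sum fun y _ => (hbC y).contDiffAt
  have hbA : ∀ y ∈ A, ‖fderiv ℝ (b y) x‖ ≤ K * 20 * (43 / 40) / d x := fun y hy => by
    refine (hbder y ((hA y).1 hy).1 x).trans ?_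
    have h1 := hlo y hy
    have hdy := hSpos y ((hA y).1 hy).1
    rw [mul_assoc, mul_div_assoc]
    refine mul_le_mul_of_nonneg_left ?_ K.2
    rw [div_le_div_iff₀ hdy hx]
    linarith
  have hsum : ∑ y ∈ A, ‖fderiv ℝ (b y) x‖ ≤ N * (K * 20 * (43 / 40)) / d x := by
    refine (Finset.sum_le_card_nsmul A _ _ hbA).trans ?_
    rw [nsmul_eq_mul, mul_div_assoc (N : ℝ)]
    have : (A.card : ℝ) ≤ N := by exact_mod_cast hAcard
    exact mul_le_mul_of_nonneg_right this (by positivity)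
  have hsder : fderiv ℝ s x = ∑ y ∈ A, fderiv ℝ (b y) x := by
    have : HasFDerivAt (fun z => ∑ y ∈ A, b y z) (∑ y ∈ A, fderiv ℝ (b y) x) x :=
      HasFDerivAt.fun_sum fun y _ => ((hbC y).differentiable (by norm_num) x).hasFDerivAt
    exact (this.congr_of_eventuallyEq hs_eq).fderiv
  have hsder' : ‖fderiv ℝ s x‖ ≤ N * (K * 20 * (43 / 40)) / d x := by
    rw [hsder]; exact (norm_sum_le _ _).trans hsum
  refine ⟨A, fun y hy => ⟨hSpos y ((hA y).1 hy).1, ?_, ?_, ?_⟩, ?_, ?_⟩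
  · have := ((hA y).1 hy).2
    have := hSpos y ((hA y).1 hy).1
    linarith
  · exact mul_nonneg (hb0 y x) (inv_nonneg.2 (by linarith))
  · exact (hbC y).contDiffAt.mul (hsC.inv (by linarith))
  · filter_upwards [hnear, hs_eq, hs1] with z hz hsz h1
    refine ⟨fun y hy => by simp [hz.2 y hy], ?_⟩
    rw [← Finset.sum_mul, ← hsz]
    exact mul_inv_cancel₀ (by linarith)
  · have hinv1 : (s x)⁻¹ ≤ 1 := inv_le_one_of_one_le₀ hsx
    have hinv0 : 0 ≤ (s x)⁻¹ := inv_nonneg.2 (by linarith)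
    have hd1 : ∀ y ∈ A, ‖fderiv ℝ (fun z => b y z * (s z)⁻¹) x‖ ≤
        b y x * (s x)⁻¹ * ‖fderiv ℝ s x‖ + ‖fderiv ℝ (b y) x‖ := fun y hy => by
      have hby := ((hbC y).differentiable (by norm_num) x).hasFDerivAt
      have hsd := (hsC.differentiableAt (by norm_num)).hasFDerivAt
      have hsi := (hasDerivAt_inv (by linarith : s x ≠ 0)).comp_hasFDerivAt x hsd
      have hm := hby.mul hsi
      have hm' : fderiv ℝ (fun z => b y z * (s z)⁻¹) x = _ := hm.fderiv
      rw [hm']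
      refine (norm_add_le _ _).trans (add_le_add ?_ ?_)
      · rw [norm_smul, norm_smul, Real.norm_eq_abs, Real.norm_eq_abs, abs_of_nonneg (hb0 y x),
          abs_neg, abs_of_nonneg (by positivity), mul_assoc]
        refine mul_le_mul_of_nonneg_left ?_ (hb0 y x)
        refine mul_le_mul_of_nonneg_right ?_ (norm_nonneg _)
        rw [pow_two, mul_inv]
        nlinarith
      · rw [norm_smul, Real.norm_eq_abs]
        change |(s x)⁻¹| * _ ≤ _
        rw [abs_of_nonneg hinv0]
        nlinarith [norm_nonneg (fderiv ℝ (b y) x)]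
    refine (Finset.sum_le_sum hd1).trans ?_
    rw [Finset.sum_add_distrib, ← Finset.sum_mul, ← Finset.sum_mul, ← hs_eq.self_of_nhds,
      mul_inv_cancel₀ (by linarith), one_mul, mul_div_assoc]
    linarith

/-! ### The scale, the paratingent cone and the slopes -/

/-- The scale function: `d x` is the infimum of the radii at which the closed ball around `x` contains
two distinct points of `F`, capped at `1`. -/
theorem exists_scale {E : Type*} [NormedAddCommGroup E] {F : Set E} (hF : IsClosed F) :
    ∃ d : E → ℝ, (∀ x, 0 ≤ d x) ∧ (∀ x y, d x - d y ≤ ‖x - y‖) ∧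
      (∀ x, d x = 0 ↔ x ∈ derSet F) ∧
      (∀ x, ∀ p ∈ F, ∀ q ∈ F, ‖x - p‖ < d x → ‖x - q‖ < d x → p = q) ∧
      (∀ x, 0 < d x → d x < 1 → ∃ p ∈ F, ‖x - p‖ ≤ 2 * d x) := by
  let T : E → Set ℝ := fun x =>
    {t | t = 1 ∨ ∃ p ∈ F, ∃ q ∈ F, p ≠ q ∧ ‖x - p‖ ≤ t ∧ ‖x - q‖ ≤ t}
  have hT0 : ∀ x, ∀ t ∈ T x, 0 ≤ t := by
    rintro x t (rfl | ⟨p, -, q, -, -, h, -⟩)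
    · norm_num
    · exact (norm_nonneg _).trans h
  have hne : ∀ x, (T x).Nonempty := fun x => ⟨1, Or.inl rfl⟩
  have hbdd : ∀ x, BddBelow (T x) := fun x => ⟨0, fun t ht => hT0 x t ht⟩
  have hle : ∀ x, ∀ p ∈ F, ∀ q ∈ F, p ≠ q → ∀ t, ‖x - p‖ ≤ t → ‖x - q‖ ≤ t → sInf (T x) ≤ t :=
    fun x p hp q hq hpq t h1 h2 => csInf_le (hbdd x) (Or.inr ⟨p, hp, q, hq, hpq, h1, h2⟩)
  have hlt : ∀ x t, sInf (T x) < t → t ≤ 1 →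
      ∃ p ∈ F, ∃ q ∈ F, p ≠ q ∧ ‖x - p‖ < t ∧ ‖x - q‖ < t := fun x t h ht1 => by
    obtain ⟨u, hu, hut⟩ := exists_lt_of_csInf_lt (hne x) h
    rcases hu with rfl | ⟨p, hp, q, hq, hpq, h1, h2⟩
    · linarith
    · exact ⟨p, hp, q, hq, hpq, by linarith, by linarith⟩
  have hd0 : ∀ x, 0 ≤ sInf (T x) := fun x => le_csInf (hne x) (hT0 x)
  refine ⟨fun x => sInf (T x), hd0, ?_, ?_, ?_, ?_⟩
  · intro x y
    suffices sInf (T x) - ‖x - y‖ ≤ sInf (T y) by linarith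
    refine le_csInf (hne y) ?_
    rintro t (rfl | ⟨p, hp, q, hq, hpq, h1, h2⟩)
    · have := csInf_le (hbdd x) (Or.inl rfl : (1 : ℝ) ∈ T x)
      have := norm_nonneg (x - y)
      linarith
    · have := hle x p hp q hq hpq (t + ‖x - y‖)
        (by have := norm_sub_le_norm_sub_add_norm_sub x y p; linarith)
        (by have := norm_sub_le_norm_sub_add_norm_sub x y q; linarith)
      linarith
  · intro x
    constructor
    · intro h
      change x ∈ closure (F \ {x})
      rw [Metric.mem_closure_iff]
      intro ε hε
      obtain ⟨p, hp, q, hq, hpq, h1, h2⟩ := hlt x (min ε 1)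
        (by change sInf (T x) = 0 at h; rw [h]; positivity) (min_le_right _ _)
      by_cases hpx : p = x
      · refine ⟨q, ⟨hq, fun h => hpq (hpx.trans (Eq.symm h))⟩, ?_⟩
        rw [dist_eq_norm]; exact h2.trans_le (min_le_left _ _)
      · refine ⟨p, ⟨hp, hpx⟩, ?_⟩
        rw [dist_eq_norm]; exact h1.trans_le (min_le_left _ _)
    · intro h
      have hxF : x ∈ F := hF.closure_subset_iff.2 sdiff_subset h
      refine le_antisymm (le_of_forall_pos_le_add fun ε hε => ?_) (hd0 x)
      obtain ⟨q, ⟨hq, hqx⟩, hdist⟩ := Metric.mem_closure_iff.1 h ε hε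
      rw [dist_eq_norm] at hdist
      refine hle x x hxF q hq (fun h => hqx h.symm) _ ?_ ?_
      · simp; linarith
      · linarith
  · intro x p hp q hq h1 h2
    by_contra hpq
    have := hle x p hp q hq hpq _ (le_max_left _ _) (le_max_right _ _)
    exact absurd (max_lt h1 h2) (not_lt.2 this)
  · intro x h0 h1
    change 0 < sInf (T x) at h0
    change sInf (T x) < 1 at h1
    obtain ⟨p, hp, q, hq, hpq, h3, h4⟩ := hlt x (min (2 * sInf (T x)) 1)
      (lt_min (by linarith) h1) (min_le_right _ _)
    exact ⟨p, hp, h3.le.trans (min_le_left _ _)⟩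

/-- When `Ptg F a` spans the space, the operator norm of `T` is controlled by its size on the
differences of points of `F` near `a`, with a constant that depends neither on `T` nor on the
radius `ρ`. -/
theorem exists_opNorm_bound_of_span_ptg {E Y : Type*} [NormedAddCommGroup E] [NormedSpace ℝ E]
    [FiniteDimensional ℝ E] [NormedAddCommGroup Y] [NormedSpace ℝ Y] {F : Set E} {a : E}
    (hspan : Submodule.span ℝ (Ptg F a) = ⊤) :
    ∃ C : ℝ, 0 < C ∧ ∀ (T : E →L[ℝ] Y) (c ρ : ℝ), 0 ≤ c → 0 < ρ →
      (∀ u ∈ F, ∀ v ∈ F, ‖u - a‖ ≤ ρ → ‖v - a‖ ≤ ρ → ‖T (u - v)‖ ≤ c * ‖u - v‖) →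
      ‖T‖ ≤ C * c := by
  have key : ∀ v : E, ∃ K : ℝ, 0 ≤ K ∧ ∀ (T : E →L[ℝ] Y) (c ρ : ℝ), 0 ≤ c → 0 < ρ →
      (∀ u ∈ F, ∀ v ∈ F, ‖u - a‖ ≤ ρ → ‖v - a‖ ≤ ρ → ‖T (u - v)‖ ≤ c * ‖u - v‖) →
      ‖T v‖ ≤ K * c := by
    intro v
    have hv : v ∈ Submodule.span ℝ (Ptg F a) := hspan ▸ Submodule.mem_top
    induction hv using Submodule.span_induction with
    | mem v hv =>
      obtain ⟨xk, yk, αk, hx, hy, hxa, hya, hlim⟩ := hv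
      refine ⟨‖v‖, norm_nonneg v, fun T c ρ hc hρ hT => ?_⟩
      rw [mul_comm]
      have h1 := ((T.continuous.tendsto v).comp hlim).norm
      have h2 := hlim.norm.const_mul c
      refine le_of_tendsto_of_tendsto h1 h2 ?_
      filter_upwards [hxa.eventually (Metric.closedBall_mem_nhds a hρ),
        hya.eventually (Metric.closedBall_mem_nhds a hρ)] with k hk1 hk2
      rw [dist_eq_norm] at hk1 hk2
      have := hT _ (hy k) _ (hx k) hk2 hk1
      simp only [Function.comp_apply, map_smul, norm_smul]
      calc ‖αk k‖ * ‖T (yk k - xk k)‖ ≤ ‖αk k‖ * (c * ‖yk k - xk k‖) := by gcongr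
        _ = c * (‖αk k‖ * ‖yk k - xk k‖) := by ring
    | zero => exact ⟨0, le_rfl, by simp⟩
    | add v w _ _ hv hw =>
      obtain ⟨K, hK, h1⟩ := hv
      obtain ⟨M, hM, h2⟩ := hw
      refine ⟨K + M, by positivity, fun T c ρ hc hρ hT => ?_⟩
      rw [map_add, add_mul]
      exact (norm_add_le _ _).trans (add_le_add (h1 T c ρ hc hρ hT) (h2 T c ρ hc hρ hT))
    | smul r v _ hv =>
      obtain ⟨K, hK, h1⟩ := hv
      refine ⟨‖r‖ * K, by positivity, fun T c ρ hc hρ hT => ?_⟩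
      rw [map_smul, norm_smul, mul_assoc]
      exact mul_le_mul_of_nonneg_left (h1 T c ρ hc hρ hT) (norm_nonneg r)
  let e := Module.finBasis ℝ E
  obtain ⟨C, hC, hbound⟩ := e.exists_opNorm_le (F := Y)
  choose K hK0 hK using key
  refine ⟨C * (∑ i, K (e i) + 1), ?_, fun T c ρ hc hρ hT => ?_⟩
  · have : 0 ≤ ∑ i, K (e i) := Finset.sum_nonneg fun i _ => hK0 _
    positivity
  · rw [mul_assoc]
    have : 0 ≤ ∑ i, K (e i) := Finset.sum_nonneg fun i _ => hK0 _
    refine hbound (by positivity) fun i => (hK (e i) T c ρ hc hρ hT).trans ?_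
    refine mul_le_mul_of_nonneg_right ?_ hc
    have := Finset.single_le_sum (f := fun i => K (e i)) (fun i _ => hK0 _) (Finset.mem_univ i)
    linarith

/-- An element of `K` minimizing the least `c` with `P b c`, up to an error `η`; the least `c` need
not exist and may be infinite. -/
theorem exists_near_minimizer {α : Type*} {K : Set α} (hK : K.Nonempty) {P : α → ℝ → Prop}
    (hP : ∀ b c c', c ≤ c' → P b c → P b c') {η : ℝ} (hη : 0 < η) :
    ∃ b ∈ K, ∀ b' ∈ K, ∀ c, 0 ≤ c → P b' c → P b (c + η) := by
  let Q : Set ℝ := {c | 0 ≤ c ∧ ∃ b ∈ K, P b c}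
  have hbdd : BddBelow Q := ⟨0, fun c hc => hc.1⟩
  by_cases hQ : Q.Nonempty
  · obtain ⟨c₀, ⟨-, b, hb, hbc⟩, hlt⟩ := exists_lt_of_csInf_lt hQ (lt_add_of_pos_right (sInf Q) hη)
    refine ⟨b, hb, fun b' hb' c hc hP' => hP b c₀ _ ?_ hbc⟩
    have := csInf_le hbdd (show c ∈ Q from ⟨hc, b', hb', hP'⟩)
    linarith
  · obtain ⟨b, hb⟩ := hK
    exact ⟨b, hb, fun b' hb' c hc hP' => absurd ⟨c, hc, b', hb', hP'⟩ hQ⟩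

/-- The choice of the slopes of the affine pieces: the first estimate gives differentiability of the
extension at every point of `derSet F`, the second gives continuity of its derivative at the
points where `D` is continuous. -/
theorem exists_slopes {E Y : Type*} [NormedAddCommGroup E] [NormedSpace ℝ E]
    [FiniteDimensional ℝ E] [NormedAddCommGroup Y] [NormedSpace ℝ Y] {F : Set E}
    (hspan : ∀ x ∈ derSet F, Submodule.span ℝ (Ptg F x) = ⊤)
    {f : E → Y} {D : E → (E →L[ℝ] Y)} (hD : ∀ x ∈ derSet F, RelStrictDerivAt f F (D x) x)
    {d : E → ℝ} (hd0 : ∀ x, 0 ≤ d x) (hd1 : ∀ x y, d x - d y ≤ ‖x - y‖)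
    (hdz : ∀ x, d x = 0 ↔ x ∈ derSet F) :
    ∃ L : E → (E →L[ℝ] Y), ∀ a ∈ derSet F,
      (∀ ε : ℝ, 0 < ε → ∀ᶠ x in 𝓝 a, 0 < d x → ‖L x - D a‖ * d x ≤ ε * ‖x - a‖) ∧
      (ContinuousWithinAt D (derSet F) a →
        ∀ ε : ℝ, 0 < ε → ∀ᶠ x in 𝓝 a, 0 < d x → ‖L x - D a‖ ≤ ε) := by
  let q : E → ℝ := fun x => √√(d x)
  have hqd : ∀ x, q x ^ 4 = d x := fun x => by
    change √√(d x) ^ 4 = d x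
    rw [show (4 : ℕ) = 2 * 2 from rfl, pow_mul, Real.sq_sqrt (Real.sqrt_nonneg _),
      Real.sq_sqrt (hd0 x)]
  have hqpos : ∀ x, 0 < d x → 0 < q x := fun x hx => Real.sqrt_pos.2 (Real.sqrt_pos.2 hx)
  have hdc : Continuous d := by
    refine (LipschitzWith.of_le_add fun x y => ?_ : LipschitzWith 1 d).continuous
    have := hd1 x y
    rw [dist_eq_norm]; linarith
  have hqc : Continuous q := Real.continuous_sqrt.comp (Real.continuous_sqrt.comp hdc)
  have hqa : ∀ a ∈ derSet F, q a = 0 := fun a ha => by simp [q, (hdz a).2 ha]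
  have hda : ∀ a ∈ derSet F, ∀ x, d x ≤ ‖x - a‖ := fun a ha x => by
    have := hd1 x a
    rw [(hdz a).2 ha] at this; linarith
  -- `cand x`: admissible base points; `P x b c`: error of the slope `D b` at scale `q x ^ 2`
  let cand : E → Set E := fun x =>
    {b | b ∈ derSet F ∧ dist x b < infDist x (derSet F) + q x ^ 2 ∧ q x * ‖D b‖ ≤ 1}
  let P : E → E → ℝ → Prop := fun x b c => ∀ u ∈ F, ∀ v ∈ F, ‖u - x‖ ≤ q x ^ 2 →
    ‖v - x‖ ≤ q x ^ 2 → ‖f u - f v - D b (u - v)‖ ≤ c * ‖u - v‖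
  have hPmono : ∀ x b c c', c ≤ c' → P x b c → P x b c' := fun x b c c' hcc h u hu v hv h1 h2 =>
    (h u hu v hv h1 h2).trans (mul_le_mul_of_nonneg_right hcc (norm_nonneg _))
  have hL : ∀ x, ∃ L : E →L[ℝ] Y, 0 < d x → q x * ‖L‖ ≤ 1 ∧ ((cand x).Nonempty →
      ∃ b ∈ cand x, L = D b ∧ ∀ b' ∈ cand x, ∀ c, 0 ≤ c → P x b' c → P x b (c + d x)) := by
    intro x
    by_cases hc : (cand x).Nonempty
    · by_cases hx : 0 < d x
      · obtain ⟨b, hb, hmin⟩ := exists_near_minimizer hc (hPmono x) hx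
        exact ⟨D b, fun _ => ⟨hb.2.2, fun _ => ⟨b, hb, rfl, hmin⟩⟩⟩
      · exact ⟨0, fun h => absurd h hx⟩
    · exact ⟨0, fun _ => ⟨by simp, fun h => absurd h hc⟩⟩
  choose L hL using hL
  refine ⟨L, fun a ha => ⟨?_, ?_⟩⟩
  · intro ε hε
    obtain ⟨C, hC, hCb⟩ := exists_opNorm_bound_of_span_ptg (Y := Y) (hspan a ha)
    set e := ε / (3 * C) with he
    have he0 : 0 < e := by positivity
    obtain ⟨δ, hδ, hstr⟩ := hD a ha e he0
    have hev : ∀ (g : E → ℝ) (r : ℝ), Continuous g → g a < r → ∀ᶠ x in 𝓝 a, g x < r :=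
      fun g r hg h => hg.continuousAt.eventually_lt continuousAt_const h
    filter_upwards [hev (fun x => q x * ‖D a‖) 1 (by fun_prop) (by simp [hqa a ha]),
      hev (fun x => q x ^ 2 + ‖x - a‖) δ (by fun_prop) (by simpa [hqa a ha] using hδ),
      hev d e hdc (by rw [(hdz a).2 ha]; exact he0),
      hev (fun x => q x + ‖D a‖ * q x ^ 2) (ε / 2) (by fun_prop)
        (by simpa [hqa a ha] using hε)] with x hx1 hx2 hx3 hx4 hx
    have hqx := hqpos x hx
    obtain ⟨hLq, hLmin⟩ := hL x hx
    by_cases hcase : ‖x - a‖ ≤ q x ^ 2 / 2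
    · -- `a` itself is a candidate, so `L x` fits `f` well on the differences which generate `Ptg F a`
      have hq2 : 0 < q x ^ 2 := by positivity
      have hac : a ∈ cand x := by
        refine ⟨ha, ?_, hx1.le⟩
        rw [dist_eq_norm]
        have := infDist_nonneg (x := x) (s := derSet F)
        linarith
      have hPa : P x a e := fun u hu v hv hux hvx => by
        refine hstr v hv u hu ?_ ?_
        · have := norm_sub_le_norm_sub_add_norm_sub v x a; linarith
        · have := norm_sub_le_norm_sub_add_norm_sub u x a; linarith
      obtain ⟨b, hb, hLb, hmin⟩ := hLmin ⟨a, hac⟩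
      have hPb := hmin a hac e he0.le hPa
      have hnorm : ‖L x - D a‖ ≤ C * (3 * e) := by
        refine hCb _ _ (q x ^ 2 / 2) (by positivity) (by positivity) fun u hu v hv hua hva => ?_
        have hux : ‖u - x‖ ≤ q x ^ 2 := by
          have := norm_sub_le_norm_sub_add_norm_sub u a x
          rw [norm_sub_rev a x] at this; linarith
        have hvx : ‖v - x‖ ≤ q x ^ 2 := by
          have := norm_sub_le_norm_sub_add_norm_sub v a x
          rw [norm_sub_rev a x] at this; linarith
        have h1 := hPa u hu v hv hux hvx
        have h2 := hPb u hu v hv hux hvx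
        have h3 : (L x - D a) (u - v) =
            (f u - f v - D a (u - v)) - (f u - f v - D b (u - v)) := by
          rw [hLb, sub_apply]; abel
        rw [h3]
        refine (norm_sub_le _ _).trans ?_
        have h4 : d x * ‖u - v‖ ≤ e * ‖u - v‖ := by gcongr
        linarith
      have hCe : C * (3 * e) = ε := by rw [he]; field_simp
      rw [hCe] at hnorm
      exact mul_le_mul hnorm (hda a ha x) (hd0 x) hε.le
    · -- here only the crude bound `‖L x‖ ≤ 1 / q x` is available, and `d x = q x ^ 4`
      push Not at hcase
      have h1 : ‖L x - D a‖ ≤ ‖L x‖ + ‖D a‖ := norm_sub_le _ _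
      rw [← hqd x]
      calc ‖L x - D a‖ * q x ^ 4 ≤ (‖L x‖ + ‖D a‖) * q x ^ 4 := by gcongr
        _ = (q x * ‖L x‖) * q x ^ 3 + ‖D a‖ * q x ^ 4 := by ring
        _ ≤ 1 * q x ^ 3 + ‖D a‖ * q x ^ 4 := by gcongr
        _ = (q x + ‖D a‖ * q x ^ 2) * q x ^ 2 := by ring
        _ ≤ (ε / 2) * (2 * ‖x - a‖) := by
          have : q x ^ 2 ≤ 2 * ‖x - a‖ := by linarith
          gcongr
        _ = ε * ‖x - a‖ := by ring
  · intro hcont ε hε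
    obtain ⟨η, hη, hDη⟩ := Metric.continuousWithinAt_iff.1 hcont (min ε 1) (by positivity)
    have hev : ∀ (g : E → ℝ) (r : ℝ), Continuous g → g a < r → ∀ᶠ x in 𝓝 a, g x < r :=
      fun g r hg h => hg.continuousAt.eventually_lt continuousAt_const h
    filter_upwards [hev (fun x => q x * (‖D a‖ + 1)) 1 (by fun_prop) (by simp [hqa a ha]),
      hev (fun x => q x ^ 2 + 2 * ‖x - a‖) η (by fun_prop) (by simpa [hqa a ha] using hη)]
      with x hx1 hx2 hx
    have hqx := hqpos x hx
    have hclose : ∀ b ∈ derSet F, dist x b < infDist x (derSet F) + q x ^ 2 →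
        ‖D b - D a‖ < min ε 1 := fun b hb hxb => by
      have h1 : infDist x (derSet F) ≤ ‖x - a‖ := by
        rw [← dist_eq_norm]; exact infDist_le_dist_of_mem ha
      rw [← dist_eq_norm]
      refine hDη hb ?_
      have := dist_triangle b x a
      rw [dist_comm b x, dist_eq_norm x a] at this
      linarith
    obtain ⟨b₀, hb₀, hxb₀⟩ := (infDist_lt_iff ⟨a, ha⟩).1
      (show infDist x (derSet F) < infDist x (derSet F) + q x ^ 2 by
        have : 0 < q x ^ 2 := by positivity
        linarith)
    have hb₀c : b₀ ∈ cand x := by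
      refine ⟨hb₀, hxb₀, le_trans ?_ hx1.le⟩
      have h1 := (hclose b₀ hb₀ hxb₀).le.trans (min_le_right _ _)
      have h2 := norm_le_norm_add_norm_sub' (D b₀) (D a)
      gcongr
      linarith
    obtain ⟨b, hb, hLb, -⟩ := (hL x hx).2 ⟨b₀, hb₀c⟩
    rw [hLb]
    exact (hclose b hb.1 hb.2.1).le.trans (min_le_left _ _)

/-! ### The extension -/

/-- The Whitney-type extension, in an arbitrary finite-dimensional normed space. -/
theorem exists_differentiable_extension {E Y : Type*} [NormedAddCommGroup E] [NormedSpace ℝ E]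
    [FiniteDimensional ℝ E] [NormedAddCommGroup Y] [NormedSpace ℝ Y] {F : Set E}
    (hF : IsClosed F) (hFne : F.Nonempty)
    (hspan : ∀ x ∈ derSet F, Submodule.span ℝ (Ptg F x) = ⊤)
    {f : E → Y} {D : E → (E →L[ℝ] Y)} (hD : ∀ x ∈ derSet F, RelStrictDerivAt f F (D x) x) :
    ∃ g : E → Y, (∀ x ∈ F, g x = f x) ∧ (∀ x ∉ derSet F, ContDiffAt ℝ 1 g x) ∧
      (∀ a ∈ derSet F, HasFDerivAt g (D a) a) ∧
      ∀ a ∈ derSet F, ContinuousWithinAt D (derSet F) a → ContinuousAt (fderiv ℝ g) a := by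
  obtain ⟨d, hd0, hd1, hdz, hdF, hdp⟩ := exists_scale hF
  obtain ⟨C, φ, hC, hφ⟩ := exists_whitney_partition d hd1
  obtain ⟨L, hL⟩ := exists_slopes hspan hD hd0 hd1 hdz
  have hderF : derSet F ⊆ F := fun x hx => hF.closure_subset_iff.2 sdiff_subset hx
  have hp : ∀ y, ∃ p ∈ F, (∀ q ∈ F, ‖y - q‖ < d y → q = p) ∧
      (0 < d y → d y < 1 → ‖y - p‖ ≤ 2 * d y) := fun y => by
    by_cases h : ∃ p ∈ F, ‖y - p‖ < d y
    · obtain ⟨p, hpF, hpy⟩ := h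
      exact ⟨p, hpF, fun q hq hqy => hdF y q hq p hpF hqy hpy, fun h0 _ => by linarith⟩
    · push Not at h
      by_cases h' : 0 < d y ∧ d y < 1
      · obtain ⟨p, hpF, hpy⟩ := hdp y h'.1 h'.2
        exact ⟨p, hpF, fun q hq hqy => absurd hqy (not_lt.2 (h q hq)), fun _ _ => hpy⟩
      · obtain ⟨p, hpF⟩ := hFne
        exact ⟨p, hpF, fun q hq hqy => absurd hqy (not_lt.2 (h q hq)),
          fun h0 h1 => absurd ⟨h0, h1⟩ h'⟩
  choose p hpF hpu hpn using hp
  have hdc : Continuous d := by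
    refine (LipschitzWith.of_le_add fun x y => ?_ : LipschitzWith 1 d).continuous
    have := hd1 x y
    rw [dist_eq_norm]; linarith
  have hda : ∀ a ∈ derSet F, ∀ x, d x ≤ ‖x - a‖ := fun a ha x => by
    have := hd1 x a
    rw [(hdz a).2 ha] at this; linarith
  let τ : E → E → Y := fun y x => f (p y) + L y (x - p y)
  let g : E → Y := fun x => open Classical in if 0 < d x then ∑ᶠ y, φ y x • τ y x else f x
  have hτ : ∀ y, ContDiff ℝ 1 (τ y) := fun y => by fun_prop
  have hτ' : ∀ y x, HasFDerivAt (τ y) (L y) x := fun y x =>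
    ((L y).hasFDerivAt.comp x ((hasFDerivAt_id x).sub_const (p y))).const_add (f (p y))
  have hgder : ∀ x, ¬ 0 < d x → g x = f x := fun x hx => by simp [g, hx]
  have hder : ∀ x, ¬ 0 < d x ↔ x ∈ derSet F := fun x => by
    rw [← hdz, not_lt]; exact ⟨fun h => le_antisymm h (hd0 x), fun h => h.le⟩
  have hgloc : ∀ x (A : Finset E), 0 < d x → (∀ᶠ z in 𝓝 x, ∀ y ∉ A, φ y z = 0) →
      g =ᶠ[𝓝 x] fun z => ∑ y ∈ A, φ y z • τ y z := fun x A hx hA => by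
    filter_upwards [hA, continuousAt_const.eventually_lt hdc.continuousAt hx] with z hz hdz
    simp only [g, hdz, if_true]
    apply finsum_eq_sum_of_support_subset
    intro y hy
    by_contra h
    exact hy (by simp [hz y h])
  -- the values: `g` minus an affine map is an average of such differences
  have hval : ∀ x, 0 < d x → ∀ (w : Y) (M : ℝ), (∀ y, 0 < d y → ‖x - y‖ ≤ d y / 10 →
      ‖τ y x - w‖ ≤ M) → ‖g x - w‖ ≤ M := by
    intro x hx w M hM
    obtain ⟨A, hA, hev, -⟩ := hφ x hx
    have hg := (hgloc x A hx (hev.mono fun z hz => hz.1)).self_of_nhds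
    have hs := hev.self_of_nhds.2
    have : g x - w = ∑ y ∈ A, φ y x • (τ y x - w) := by
      simp only [smul_sub, Finset.sum_sub_distrib, ← Finset.sum_smul, hs, one_smul, hg]
    rw [this]
    calc ‖∑ y ∈ A, φ y x • (τ y x - w)‖ ≤ ∑ y ∈ A, φ y x * M := by
          refine norm_sum_le_of_le _ fun y hy => ?_
          obtain ⟨h1, h2, h3, -⟩ := hA y hy
          rw [norm_smul, Real.norm_eq_abs, abs_of_nonneg h3]
          exact mul_le_mul_of_nonneg_left (hM y h1 h2) h3
      _ = M := by rw [← Finset.sum_mul, hs, one_mul]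
  have hCD : ∀ x, 0 < d x → ContDiffAt ℝ 1 g x := fun x hx => by
    obtain ⟨A, hA, hev, -⟩ := hφ x hx
    refine ContDiffAt.congr_of_eventuallyEq ?_ (hgloc x A hx (hev.mono fun z hz => hz.1))
    exact ContDiffAt.sum fun y hy => (hA y hy).2.2.2.smul (hτ y).contDiffAt
  -- the gradient of the partition has mean zero, so it only sees differences of the `τ y`
  have hgrad : ∀ x, 0 < d x → ∀ (T : E →L[ℝ] Y) (w : Y) (M N : ℝ),
      (∀ y, 0 < d y → ‖x - y‖ ≤ d y / 10 → ‖L y - T‖ ≤ M) →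
      (∀ y, 0 < d y → ‖x - y‖ ≤ d y / 10 → ‖τ y x - w‖ ≤ N) → 0 ≤ N →
      ‖fderiv ℝ g x - T‖ ≤ M + C / d x * N := by
    intro x hx T w M N hM hN hN0
    obtain ⟨A, hA, hev, hAC⟩ := hφ x hx
    have hs := hev.self_of_nhds.2
    have hφ' : ∀ y ∈ A, HasFDerivAt (φ y) (fderiv ℝ (φ y) x) x := fun y hy =>
      ((hA y hy).2.2.2.differentiableAt (by norm_num)).hasFDerivAt
    have hzero : ∑ y ∈ A, fderiv ℝ (φ y) x = 0 := by
      have h1 : HasFDerivAt (fun z => ∑ y ∈ A, φ y z) (∑ y ∈ A, fderiv ℝ (φ y) x) x :=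
        HasFDerivAt.fun_sum hφ'
      exact h1.unique ((hasFDerivAt_const (1 : ℝ) x).congr_of_eventuallyEq
        (hev.mono fun z hz => hz.2))
    have hg : fderiv ℝ g x = ∑ y ∈ A, (φ y x • L y + (fderiv ℝ (φ y) x).smulRight (τ y x)) :=
      ((HasFDerivAt.fun_sum fun y hy => (hφ' y hy).smul (hτ' y x)).congr_of_eventuallyEq
        (hgloc x A hx (hev.mono fun z hz => hz.1))).fderiv
    have hsplit : fderiv ℝ g x - T = ∑ y ∈ A, φ y x • (L y - T) +
        ∑ y ∈ A, (fderiv ℝ (φ y) x).smulRight (τ y x - w) := by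
      have h1 : ∑ y ∈ A, (fderiv ℝ (φ y) x).smulRight (τ y x - w) =
          ∑ y ∈ A, (fderiv ℝ (φ y) x).smulRight (τ y x) := by
        ext v
        have := congrArg (fun l : E →L[ℝ] ℝ => l v • w) hzero
        simp only [sum_apply, Finset.sum_smul, zero_apply, zero_smul] at this
        simp [smul_sub, Finset.sum_sub_distrib, this]
      rw [h1, hg]
      simp only [smul_sub, Finset.sum_sub_distrib, ← Finset.sum_smul, hs, one_smul,
        Finset.sum_add_distrib]
      abel
    rw [hsplit]
    refine (norm_add_le _ _).trans (add_le_add ?_ ?_)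
    · calc ‖∑ y ∈ A, φ y x • (L y - T)‖ ≤ ∑ y ∈ A, φ y x * M := by
            refine norm_sum_le_of_le _ fun y hy => ?_
            obtain ⟨h1, h2, h3, -⟩ := hA y hy
            rw [norm_smul, Real.norm_eq_abs, abs_of_nonneg h3]
            exact mul_le_mul_of_nonneg_left (hM y h1 h2) h3
        _ = M := by rw [← Finset.sum_mul, hs, one_mul]
    · calc ‖∑ y ∈ A, (fderiv ℝ (φ y) x).smulRight (τ y x - w)‖
          ≤ ∑ y ∈ A, ‖fderiv ℝ (φ y) x‖ * N := by
            refine norm_sum_le_of_le _ fun y hy => ?_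
            obtain ⟨h1, h2, -⟩ := hA y hy
            rw [ContinuousLinearMap.norm_smulRight_apply]
            exact mul_le_mul_of_nonneg_left (hN y h1 h2) (norm_nonneg _)
        _ ≤ C / d x * N := by
            rw [← Finset.sum_mul]
            exact mul_le_mul_of_nonneg_right hAC hN0
  -- metric relations between a point near `a ∈ derSet F` and the indices active there
  have hgeom : ∀ a ∈ derSet F, ∀ x y, ‖x - a‖ < 1 / 2 → 0 < d y → ‖x - y‖ ≤ d y / 10 →
      d y ≤ 10 / 9 * d x ∧ ‖x - p y‖ ≤ 3 * d x ∧ ‖p y - a‖ ≤ 4 * ‖x - a‖ ∧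
      ‖y - a‖ ≤ 2 * ‖x - a‖ := fun a ha x y hx hy hxy => by
    have h1 := hd1 y x
    rw [norm_sub_rev] at h1
    have h2 := hda a ha x
    have h3 := hpn y hy (by linarith)
    have h4 := norm_sub_le_norm_sub_add_norm_sub x y (p y)
    have h5 := norm_sub_le_norm_sub_add_norm_sub (p y) x a
    have h6 := norm_sub_le_norm_sub_add_norm_sub y x a
    rw [norm_sub_rev (p y) x] at h5
    rw [norm_sub_rev y x] at h6
    refine ⟨by linarith, by linarith, by linarith, by linarith⟩
  have hmain : ∀ a ∈ derSet F, HasFDerivAt g (D a) a := by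
    intro a ha
    rw [hasFDerivAt_iff_isLittleO, Asymptotics.isLittleO_iff]
    intro ε hε
    have hga : g a = f a := hgder a ((hder a).2 ha)
    set e := ε / 10 with he
    have he0 : 0 < e := by positivity
    obtain ⟨δ, hδ, hstr⟩ := hD a ha e he0
    obtain ⟨η, hη, hLη⟩ := Metric.eventually_nhds_iff.1 ((hL a ha).1 e he0)
    filter_upwards [Metric.ball_mem_nhds a (show 0 < min (1 / 2) (min (δ / 4) (η / 2)) by
      positivity)] with x hx
    rw [mem_ball, dist_eq_norm, lt_min_iff, lt_min_iff] at hx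
    obtain ⟨hx1, hx2, hx3⟩ := hx
    have haF := hderF ha
    by_cases hdx : 0 < d x
    · have := hval x hdx (f a + D a (x - a)) (ε * ‖x - a‖) fun y hy hxy => by
        obtain ⟨h1, h2, h3, h4⟩ := hgeom a ha x y hx1 hy hxy
        have h5 := hstr a haF (p y) (hpF y) (by simpa using hδ) (by linarith)
        have h6 := hLη (y := y) (by rw [dist_eq_norm]; linarith) hy
        have h7 : τ y x - (f a + D a (x - a)) =
            (f (p y) - f a - D a (p y - a)) + (L y - D a) (x - p y) := by
          simp only [τ, sub_apply, map_sub]; abel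
        have h8 : ‖(L y - D a) (x - p y)‖ ≤ ‖L y - D a‖ * (21 / 10 * d y) := by
          refine ((L y - D a).le_opNorm _).trans ?_
          refine mul_le_mul_of_nonneg_left ?_ (norm_nonneg _)
          have h9 := norm_sub_le_norm_sub_add_norm_sub x y (p y)
          have h10 := hpn y hy (by have := hda a ha x; linarith)
          linarith
        rw [h7]
        refine (norm_add_le _ _).trans ?_
        have h11 : e * ‖p y - a‖ ≤ e * (4 * ‖x - a‖) := by gcongr
        have h12 : e * ‖y - a‖ ≤ e * (2 * ‖x - a‖) := by gcongr
        have h13 : ε * ‖x - a‖ = 10 * (e * ‖x - a‖) := by rw [he]; ring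
        have h14 : 0 ≤ e * ‖x - a‖ := by positivity
        linarith
      rw [hga]
      rwa [sub_sub]
    · have hxd := (hder x).1 hdx
      rw [hgder x hdx, hga]
      refine (hstr a haF x (hderF hxd) (by simpa using hδ) (by linarith)).trans ?_
      gcongr
      linarith
  refine ⟨g, ?_, fun x hx => hCD x (by by_contra h; exact hx ((hder x).1 h)), hmain, ?_⟩
  · intro x hxF
    by_cases hdx : 0 < d x
    · have := hval x hdx (f x) 0 fun y hy hxy => by
        rw [norm_sub_rev] at hxy
        have := hpu y x hxF (by linarith)
        simp [τ, ← this]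
      exact sub_eq_zero.1 (norm_le_zero_iff.1 this)
    · exact hgder x hdx
  · intro a ha hcont
    rw [ContinuousAt, (hmain a ha).fderiv, Metric.tendsto_nhds]
    intro ε hε
    set e := ε / (2 * (1 + 9 * C)) with he
    have he0 : 0 < e := by positivity
    obtain ⟨δ, hδ, hstr⟩ := hD a ha e he0
    obtain ⟨η, hη, hLη⟩ := Metric.eventually_nhds_iff.1 ((hL a ha).2 hcont e he0)
    obtain ⟨θ, hθ, hDθ⟩ := Metric.continuousWithinAt_iff.1 hcont ε hε
    filter_upwards [Metric.ball_mem_nhds a (show 0 < min (min θ (1 / 2)) (min (δ / 4) (η / 2)) by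
      positivity)] with x hx
    rw [mem_ball, dist_eq_norm, lt_min_iff, lt_min_iff, lt_min_iff] at hx
    obtain ⟨⟨hx0, hx1⟩, hx2, hx3⟩ := hx
    by_cases hdx : 0 < d x
    · obtain ⟨-, hx3d, hx4, -⟩ := hgeom a ha x x hx1 hdx (by simp; linarith)
      have hLy : ∀ y, 0 < d y → ‖x - y‖ ≤ d y / 10 → ‖L y - D a‖ ≤ e := fun y hy hxy => by
        obtain ⟨-, -, -, h4⟩ := hgeom a ha x y hx1 hy hxy
        exact hLη (by rw [dist_eq_norm]; linarith) hy
      have hbound := hgrad x hdx (D a) (f (p x) + D a (x - p x)) e (9 * e * d x) hLy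
        (fun y hy hxy => by
          obtain ⟨h1, h2, h3, h4⟩ := hgeom a ha x y hx1 hy hxy
          have h5 := hstr (p x) (hpF x) (p y) (hpF y) (by linarith) (by linarith)
          have h7 : τ y x - (f (p x) + D a (x - p x)) =
              (f (p y) - f (p x) - D a (p y - p x)) + (L y - D a) (x - p y) := by
            simp only [τ, sub_apply, map_sub]; abel
          have h8 : ‖(L y - D a) (x - p y)‖ ≤ e * (3 * d x) :=
            ((L y - D a).le_opNorm _).trans
              (mul_le_mul (hLy y hy hxy) h2 (norm_nonneg _) he0.le)
          have h9 : ‖p y - p x‖ ≤ 6 * d x := by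
            have := norm_sub_le_norm_sub_add_norm_sub (p y) x (p x)
            rw [norm_sub_rev (p y) x] at this; linarith
          have h10 : e * ‖p y - p x‖ ≤ e * (6 * d x) := by gcongr
          rw [h7]
          refine (norm_add_le _ _).trans ?_
          linarith) (by positivity)
      rw [dist_eq_norm]
      have h1 : e + C / d x * (9 * e * d x) = ε / 2 := by
        rw [he]; field_simp
      linarith
    · have hxd := (hder x).1 hdx
      rw [(hmain x hxd).fderiv]
      exact hDθ hxd (by rw [dist_eq_norm]; exact hx0)

/-- Strengthened extension of strictly differentiable functions from a nonempty closed set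
`F ⊆ ℝⁿ` whose paratingent cone spans `ℝⁿ` at every accumulation point: `D` being the
(unique) relative strict derivative of `f` on `der F`, there is an everywhere
differentiable extension `f̄` of `f` which is strictly differentiable and has continuous
derivative at every point outside `der F`, and at every point of `der F` where `D` is
continuous with respect to `der F`. -/
theorem strict_extension_of_strictly_differentiable
    (n : ℕ) {Y : Type*} [NormedAddCommGroup Y] [NormedSpace ℝ Y]
    (F : Set (EuclideanSpace ℝ (Fin n))) (hF : IsClosed F) (hFne : F.Nonempty)
    (hspan : ∀ x ∈ derSet F, Submodule.span ℝ (Ptg F x) = ⊤)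
    (f : EuclideanSpace ℝ (Fin n) → Y)
    (D : EuclideanSpace ℝ (Fin n) → (EuclideanSpace ℝ (Fin n) →L[ℝ] Y))
    (hD : ∀ x ∈ derSet F, RelStrictDerivAt f F (D x) x) :
    ∃ fbar : EuclideanSpace ℝ (Fin n) → Y,
      (∀ x ∈ F, fbar x = f x) ∧
      Differentiable ℝ fbar ∧
      ∀ x : EuclideanSpace ℝ (Fin n),
        (x ∉ derSet F ∨ (x ∈ derSet F ∧ ContinuousWithinAt D (derSet F) x)) →
        (RelStrictDerivAt fbar Set.univ (fderiv ℝ fbar x) x ∧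
          ContinuousAt (fderiv ℝ fbar) x) := by
  obtain ⟨g, hgf, hg1, hg2, hg3⟩ := exists_differentiable_extension hF hFne hspan hD
  have hdiff : Differentiable ℝ g := fun x => by
    by_cases hx : x ∈ derSet F
    · exact (hg2 x hx).differentiableAt
    · exact (hg1 x hx).differentiableAt (by norm_num)
  refine ⟨g, hgf, hdiff, fun x hx => ?_⟩
  have hcont : ContinuousAt (fderiv ℝ g) x := by
    rcases hx with hx | ⟨hx, hc⟩
    · exact ((hg1 x hx).fderiv_right (m := 0) (by norm_num)).continuousAt
    · exact hg3 x hx hc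
  refine ⟨?_, hcont⟩
  -- a differentiable map whose derivative is continuous at `x` is strictly differentiable at `x`
  have hstrict := hasStrictFDerivAt_of_hasFDerivAt_of_continuousAt
    (Eventually.of_forall fun y => (hdiff y).hasFDerivAt) hcont
  intro ε hε
  obtain ⟨δ, hδ, h⟩ := Metric.eventually_nhds_iff.1
    ((Asymptotics.isLittleO_iff.1 hstrict.isLittleO) hε)
  refine ⟨δ, hδ, fun u _ v _ hu hv => ?_⟩
  refine h (y := (v, u)) ?_
  rw [Prod.dist_eq, dist_eq_norm, dist_eq_norm]
  exact max_lt hv hu
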